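/- Let K be a field, let S be a family of cardinality ℵ1 of pairwise almost disjoint infinite subsets of ω, and let R′ be the K-subalgebra of K^ω generated as a K-linear subspace by B ∪ C ∪ {1}, where 1 is the unit of K^ω, B is the canonical basis of K^{(ω)}, and C is the set of characteristic functions of the sets in S. Then R′ is a semiartinian von Neumann regular ring with primitive factors artinian of Loewy length 3, whose layers are L_0 ≅ K^{(ω)}, L_1 ≅ K^{(ω_1)} (as rings without unit, direct sums of copies of K), and L_2 ≅ K; moreover R′ is not right hereditary. -/

import Mathlib

set_option synthInstance.maxHeartbeats 1000000
set_option maxHeartbeats 2000000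


universe u

open Submodule Function

/-- The socle of a module: the supremum of all simple submodules. -/
def moduleSocle (R : Type*) (M : Type*) [Ring R] [AddCommGroup M] [Module R M] :
    Submodule R M :=
  sSup {W : Submodule R M | IsSimpleModule R ↥W}

/-- A ring is right semiartinian if every nonzero quotient of the right module `R_R`
has a nonzero socle. -/
def IsRightSemiartinian (R : Type u) [Ring R] : Prop :=
  ∀ I : Submodule Rᵐᵒᵖ R, I ≠ ⊤ → moduleSocle Rᵐᵒᵖ (R ⧸ I) ≠ ⊥

/-- The right socle sequence of a ring: `S_0 = 0`, `S_{α+1}/S_α = Soc(R/S_α)`,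
and unions at limits. -/
noncomputable def socleSeq (R : Type u) [Ring R] : Ordinal.{u} → Submodule Rᵐᵒᵖ R :=
  fun o => Ordinal.limitRecOn o ⊥
    (fun _ S => Submodule.comap S.mkQ (moduleSocle Rᵐᵒᵖ (R ⧸ S)))
    (fun o _ ih => ⨆ (β : Ordinal.{u}) (h : β < o), ih β h)

/-- `S_α`, viewed as a submodule of `S_{α+1}`; the kernel of the `α`-th layer
epimorphism `π_α : S_{α+1} → S_{α+1}/S_α`. -/
noncomputable def layerKer (R : Type u) [Ring R] (α : Ordinal.{u}) :
    Submodule Rᵐᵒᵖ ↥(socleSeq R (α + 1)) :=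
  (socleSeq R α).comap (socleSeq R (α + 1)).subtype

/-- The `α`-th layer `L_α = S_{α+1}/S_α` of a ring. -/
noncomputable abbrev Layer (R : Type u) [Ring R] (α : Ordinal.{u}) :=
  ↥(socleSeq R (α + 1)) ⧸ layerKer R α

/-- A module `M` is weakly `R`-projective if for each `0 < α ≤ σ`, every homomorphism
`f : M → L_α` with finitely generated image factors through the `α`-th layer
epimorphism `π_α : S_{α+1} → L_α`. -/
def WeaklyRProjective (R : Type u) [Ring R] (σ : Ordinal.{u})
    (M : Type u) [AddCommGroup M] [Module Rᵐᵒᵖ M] : Prop :=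
  ∀ α : Ordinal.{u}, 0 < α → α ≤ σ →
    ∀ f : M →ₗ[Rᵐᵒᵖ] Layer R α, (LinearMap.range f).FG →
      ∃ g : M →ₗ[Rᵐᵒᵖ] ↥(socleSeq R (α + 1)), (layerKer R α).mkQ ∘ₗ g = f

/-- A ring is von Neumann regular if each `r` admits `s` with `r * s * r = r`. -/
def IsVNRegular (R : Type u) [Ring R] : Prop :=
  ∀ r : R, ∃ s : R, r * s * r = r

/-- The annihilator of a right `R`-module, as a submodule of the right module `R_R`. -/
def rightAnnihilator (R : Type u) [Ring R] (M : Type u) [AddCommGroup M]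
    [Module Rᵐᵒᵖ M] : Submodule Rᵐᵒᵖ R where
  carrier := {r : R | ∀ m : M, MulOpposite.op r • m = 0}
  add_mem' := by
    intro a b ha hb m
    rw [MulOpposite.op_add, add_smul, ha m, hb m, add_zero]
  zero_mem' := by
    intro m
    rw [MulOpposite.op_zero, zero_smul]
  smul_mem' := by
    intro c r hr m
    have h : MulOpposite.op (c • r) = c * MulOpposite.op r := by
      rw [MulOpposite.smul_eq_mul_unop, MulOpposite.op_mul, MulOpposite.op_unop]
    rw [h, mul_smul, hr m, smul_zero]

/-- A ring has (right) primitive factors artinian if, for each right primitive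
(two-sided) ideal `P`, i.e. the annihilator of a simple right module, the factor
`R/P` is (right) artinian. -/
def HasPFA (R : Type u) [Ring R] : Prop :=
  ∀ (M : Type u) [AddCommGroup M] [Module Rᵐᵒᵖ M], IsSimpleModule Rᵐᵒᵖ M →
    IsArtinian Rᵐᵒᵖ (R ⧸ rightAnnihilator R M)

/-- The additive equivalence `φ` from the layer `L_α = S_{α+1}/S_α` of `R` to a
(non-unital) ring `A` respects the multiplication induced from `R`: note that for
`x, y ∈ S_{α+1}` the product `x * y` equals `op y • x ∈ S_{α+1}`.  Together with
additivity this says that `φ` is an isomorphism of rings without unit. -/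
def RespectsLayerMul (R : Type u) [Ring R] (α : Ordinal.{u}) {A : Type u} [Mul A] [Add A]
    (φ : Layer R α ≃+ A) : Prop :=
  ∀ x y : ↥(socleSeq R (α + 1)),
    φ (Submodule.Quotient.mk (MulOpposite.op (y : R) • x)) =
      φ (Submodule.Quotient.mk x) * φ (Submodule.Quotient.mk y)

/-!
Every `f ∈ R'` agrees, off a finite set, with a constant plus a finite combination of characteristic
functions of members of `S`. By almost disjointness it is eventually constant along each `A ∈ S`,
which gives a character `branch A`, and for all but finitely many `A` this eventual value is the
same, which gives a character `infinity`. The socle sequence is then `S₁ = ⋂ ker (branch A)`,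
`S₂ = ker infinity`, `S₃ = R'`, and the layers are read off from the values of the evaluation
characters, of the `branch A` and of `infinity`.

If `S₂` were projective, take a dual basis of it. An `R'`-linear functional on `S₂` is determined by
its values at the functions `Pi.single x 1`, so the dual basis vectors whose coordinate functional
does not vanish identically on these functions already generate `S₂`, and there are at most
`max #X ℵ₀` of them. But each element of `S₂` has a nonzero value at only finitely many of the `#S`
characters `branch A`, whereas none of these vanishes on `S₂`.
-/

open Cardinal
open Filter (cofinite)
open scoped Filter

universe v w

section Socle

variable {R M N : Type*} [Ring R] [AddCommGroup M] [Module R M] [AddCommGroup N] [Module R N]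

theorem isSimpleModule_span_singleton {v : M} (hv : v ≠ 0)
    (h : ∀ r : R, r • v ≠ 0 → ∃ s : R, s • r • v = v) : IsSimpleModule R (R ∙ v) := by
  refine isSimpleModule_iff_isAtom.2 ⟨by simpa using hv, fun W hW ↦ ?_⟩
  rw [Submodule.eq_bot_iff]
  intro x hx
  by_contra hx0
  obtain ⟨r, rfl⟩ := mem_span_singleton.1 (hW.le hx)
  obtain ⟨s, hs⟩ := h r hx0
  exact hW.not_ge ((span_singleton_le_iff_mem v W).2 (hs ▸ W.smul_mem s hx))

theorem map_moduleSocle_le (f : M →ₗ[R] N) : (moduleSocle R M).map f ≤ moduleSocle R N := by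
  rw [map_le_iff_le_comap]
  refine sSup_le fun W (hW : IsSimpleModule R W) ↦ map_le_iff_le_comap.1 ?_
  rcases (f.domRestrict W).injective_or_eq_zero with hinj | hzero
  · have e : W ≃ₗ[R] W.map f := LinearEquiv.ofBijective (f.submoduleMap W)
      ⟨fun x y hxy ↦ hinj (congrArg Subtype.val hxy), f.submoduleMap_surjective W⟩
    exact le_sSup (IsSimpleModule.congr e.symm)
  · rintro _ ⟨w, hw, rfl⟩
    have : f w = 0 := LinearMap.congr_fun hzero ⟨w, hw⟩
    simp [this]

theorem moduleSocle_le_of_essential {E : Submodule R M}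
    (h : ∀ x : M, x ≠ 0 → ∃ r : R, r • x ∈ E ∧ r • x ≠ 0) : moduleSocle R M ≤ E := by
  refine sSup_le fun W hW ↦ ?_
  have hW : IsAtom W := isSimpleModule_iff_isAtom.1 hW
  obtain ⟨x, hxW, hx0⟩ := W.ne_bot_iff.1 hW.1
  obtain ⟨r, hrE, hr0⟩ := h x hx0
  have hne : W ⊓ E ≠ ⊥ := (Submodule.ne_bot_iff _).2 ⟨r • x, ⟨W.smul_mem r hxW, hrE⟩, hr0⟩
  exact inf_eq_left.1 ((hW.le_iff.1 inf_le_left).resolve_left hne)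

end Socle

section SocleSequence

variable {R : Type u} [Ring R]

theorem socleSeq_zero : socleSeq R 0 = ⊥ :=
  Ordinal.limitRecOn_zero ..

theorem socleSeq_add_one (α : Ordinal.{u}) : socleSeq R (α + 1) =
    (moduleSocle Rᵐᵒᵖ (R ⧸ socleSeq R α)).comap (socleSeq R α).mkQ :=
  Ordinal.limitRecOn_add_one ..

theorem socleSeq_of_isSuccLimit {α : Ordinal.{u}} (hα : Order.IsSuccLimit α) :
    socleSeq R α = ⨆ β < α, socleSeq R β :=
  Ordinal.limitRecOn_limit _ _ _ _ hα

theorem socleSeq_le_add_one (α : Ordinal.{u}) : socleSeq R α ≤ socleSeq R (α + 1) := by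
  rw [socleSeq_add_one]
  exact (ker_mkQ _).ge.trans (LinearMap.ker_le_comap _)

theorem socleSeq_mono : Monotone (socleSeq R) := by
  intro α β
  induction β using Ordinal.limitRecOn with
  | zero => intro h; rw [nonpos_iff_eq_zero.1 h]
  | add_one β ih =>
    intro h
    rcases h.eq_or_lt with rfl | h
    · rfl
    · exact (ih (Order.lt_add_one_iff.1 h)).trans (socleSeq_le_add_one β)
  | limit β hβ _ =>
    intro h
    rcases h.eq_or_lt with rfl | h
    · rfl
    · rw [socleSeq_of_isSuccLimit hβ]
      exact le_iSup₂_of_le α h le_rfl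

theorem isLeast_socleSeq_eq_top {α : Ordinal.{u}} (hα : socleSeq R α ≠ ⊤)
    (hα' : socleSeq R (α + 1) = ⊤) : IsLeast {o | socleSeq R o = ⊤} (α + 1) := by
  refine ⟨hα', fun o (ho : socleSeq R o = ⊤) ↦ ?_⟩
  by_contra hlt
  exact hα (top_le_iff.1 (ho.ge.trans (socleSeq_mono (Order.lt_add_one_iff.1 (not_le.1 hlt)))))

theorem socleSeq_le_of_moduleSocle_eq_bot {I : Submodule Rᵐᵒᵖ R}
    (hI : moduleSocle Rᵐᵒᵖ (R ⧸ I) = ⊥) (α : Ordinal.{u}) : socleSeq R α ≤ I := by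
  induction α using Ordinal.limitRecOn with
  | zero => exact socleSeq_zero.trans_le bot_le
  | add_one α ih =>
    intro x hx
    rw [socleSeq_add_one] at hx
    have hx' := map_moduleSocle_le (factor ih) (mem_map_of_mem hx)
    rw [hI, Submodule.mem_bot] at hx'
    exact (Quotient.mk_eq_zero I).1 hx'
  | limit α hα ih =>
    rw [socleSeq_of_isSuccLimit hα]
    exact iSup₂_le ih

theorem isRightSemiartinian_of_socleSeq_eq_top {α : Ordinal.{u}} (hα : socleSeq R α = ⊤) :
    IsRightSemiartinian R :=
  fun _ hI hsoc ↦ hI (top_le_iff.1 (hα.ge.trans (socleSeq_le_of_moduleSocle_eq_bot hsoc α)))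

theorem exists_layerEquiv_of_surjective {α : Ordinal.{u}} {A : Type u} [NonUnitalNonAssocRing A]
    (ψ : socleSeq R (α + 1) →+ A) (hsurj : Surjective ψ)
    (hker : ∀ x, ψ x = 0 ↔ (x : R) ∈ socleSeq R α)
    (hmul : ∀ x y : socleSeq R (α + 1), ψ (MulOpposite.op (y : R) • x) = ψ x * ψ y) :
    ∃ φ : Layer R α ≃+ A, RespectsLayerMul R α φ := by
  have hker' : (layerKer R α).toAddSubgroup = ψ.ker := by
    ext x
    exact (hker x).symm
  exact ⟨(QuotientAddGroup.quotientAddEquivOfEq hker').trans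
    (QuotientAddGroup.quotientKerEquivOfSurjective ψ hsurj), hmul⟩

theorem RespectsLayerMul.trans {α : Ordinal.{u}} {A B : Type u} [Mul A] [Add A] [Mul B] [Add B]
    {φ : Layer R α ≃+ A} (hφ : RespectsLayerMul R α φ) (e : A ≃+ B)
    (he : ∀ a b, e (a * b) = e a * e b) : RespectsLayerMul R α (φ.trans e) :=
  fun x y ↦ (congrArg e (hφ x y)).trans (he _ _)

end SocleSequence

section CommRing

/-- The homomorphism `r ↦ m r` of right modules attached to an element `m` of a right module. -/
def rightOrbitMap {R M : Type*} [Ring R] [AddCommGroup M] [Module Rᵐᵒᵖ M] (m : M) :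
    R →ₗ[Rᵐᵒᵖ] M where
  toFun r := MulOpposite.op r • m
  map_add' r s := by rw [MulOpposite.op_add, add_smul]
  map_smul' a r := mul_smul a (MulOpposite.op r) m

theorem ker_rightOrbitMap {R M : Type u} [CommRing R] [AddCommGroup M] [Module Rᵐᵒᵖ M]
    [IsSimpleModule Rᵐᵒᵖ M] {m : M} (hm : m ≠ 0) :
    LinearMap.ker (rightOrbitMap m) = rightAnnihilator R M := by
  refine le_antisymm (fun r (hr : MulOpposite.op r • m = 0) m' ↦ ?_) fun r hr ↦ hr m
  obtain ⟨t, rfl⟩ := IsSimpleModule.toSpanSingleton_surjective Rᵐᵒᵖ hm m'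
  rw [LinearMap.toSpanSingleton_apply, ← mul_smul, mul_comm, mul_smul, hr, smul_zero]

theorem hasPFA_of_commRing (R : Type u) [CommRing R] : HasPFA R := by
  intro M _ _ hM
  have := IsSimpleModule.nontrivial Rᵐᵒᵖ M
  obtain ⟨m, hm⟩ := exists_ne (0 : M)
  rw [← ker_rightOrbitMap hm]
  have : IsArtinian Rᵐᵒᵖ (LinearMap.range (rightOrbitMap (R := R) m)) := inferInstance
  exact isArtinian_of_linearEquiv (rightOrbitMap (R := R) m).quotKerEquivRange.symm

end CommRing

theorem lift_mk_iUnion_le_of_finite {ι : Type v} {α : Type w} {F : ι → Set α}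
    (hF : ∀ i, (F i).Finite) : lift.{v} #(⋃ i, F i) ≤ max (lift.{w} #ι) ℵ₀ :=
  calc lift.{v} #(⋃ i, F i)
    _ ≤ lift.{w} #ι * ⨆ i, lift.{v} #(F i) := mk_iUnion_le_lift F
    _ ≤ lift.{w} #ι * ℵ₀ := by
      gcongr
      exact ciSup_le' fun i ↦ lift_le_aleph0.2 (mk_le_aleph0_iff.2 (hF i).countable)
    _ ≤ max (lift.{w} #ι) ℵ₀ := (mul_le_max _ _).trans (by simp)

theorem exists_span_eq_top_of_projective {R : Type*} {M : Type w} {X : Type v} [Semiring R]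
    [AddCommMonoid M] [Module R M] [Module.Projective R M] (b : X → M)
    (hb : ∀ f : M →ₗ[R] R, (∀ x, f (b x) = 0) → f = 0) :
    ∃ T : Set M, span R T = ⊤ ∧ lift.{v} #T ≤ max (lift.{w} #X) ℵ₀ := by
  obtain ⟨s, hs⟩ := Module.projective_def'.1 ‹Module.Projective R M›
  let T : Set M := ⋃ x, (s (b x)).support
  have hsT (m t : M) (ht : t ∉ T) : s m t = 0 := by
    refine LinearMap.congr_fun (hb (Finsupp.lapply t ∘ₗ s) fun x ↦ ?_) m
    exact Finsupp.notMem_support_iff.1 fun h ↦ ht (Set.mem_iUnion.2 ⟨x, h⟩)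
  refine ⟨T, eq_top_iff.2 fun m _ ↦ ?_, lift_mk_iUnion_le_of_finite fun x ↦ Finset.finite_toSet _⟩
  have hm : Finsupp.linearCombination R id (s m) = m := LinearMap.congr_fun hs m
  rw [← hm]
  refine sum_mem fun t ht ↦ smul_mem _ _ (subset_span ?_)
  by_contra h
  exact Finsupp.mem_support_iff.1 ht (hsT m t h)

/-- The right ideal of the elements annihilated by every member of a family of characters. -/
def commonKer {K R ι : Type*} [CommSemiring K] [Ring R] [Algebra K R] (φ : ι → R →ₐ[K] K) :
    Submodule Rᵐᵒᵖ R where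
  carrier := {f | ∀ i, φ i f = 0}
  add_mem' hf hg i := by rw [map_add, hf i, hg i, add_zero]
  zero_mem' i := map_zero (φ i)
  smul_mem' r f hf i := by rw [MulOpposite.smul_eq_mul_unop, map_mul, hf i, zero_mul]

theorem mkQ_mem_moduleSocle_of_forall_ne {K R ι : Type*} [Field K] [CommRing R] [Algebra K R]
    {φ : ι → R →ₐ[K] K} {i : ι} {f : R} (hf : ∀ j ≠ i, φ j f = 0) :
    (commonKer φ).mkQ f ∈ moduleSocle Rᵐᵒᵖ (R ⧸ commonKer φ) := by
  have mkQ_eq_zero {g : R} (hg : ∀ j ≠ i, φ j g = 0) (hg' : φ i g = 0) :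
      (commonKer φ).mkQ g = 0 :=
    (Quotient.mk_eq_zero _).2 fun j ↦ (eq_or_ne j i).elim (fun h ↦ h ▸ hg') (hg j)
  by_cases h0 : (commonKer φ).mkQ f = 0
  · rw [h0]
    exact zero_mem _
  have hsimple : IsSimpleModule Rᵐᵒᵖ (span Rᵐᵒᵖ {(commonKer φ).mkQ f}) := by
    refine isSimpleModule_span_singleton h0 fun r hr ↦ ?_
    have hr0 : φ i r.unop ≠ 0 := fun hr0 ↦ hr <| by
      rw [← map_smul]
      exact mkQ_eq_zero (fun j hj ↦ by simp [hf j hj]) (by simp [hr0])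
    refine ⟨MulOpposite.op (algebraMap K R (φ i r.unop)⁻¹), ?_⟩
    rw [← map_smul, ← map_smul, ← sub_eq_zero, ← map_sub]
    exact mkQ_eq_zero (fun j hj ↦ by simp [hf j hj]) (by simp [hr0])
  exact (le_sSup hsimple : span Rᵐᵒᵖ {(commonKer φ).mkQ f} ≤ moduleSocle Rᵐᵒᵖ _)
    (mem_span_singleton_self _)

theorem linearMap_eq_zero_of_commonKer_eq_bot {K R X : Type*} [CommSemiring K] [CommRing R]
    [Algebra K R] {J : Submodule Rᵐᵒᵖ R} {ε : X → R →ₐ[K] K} (hε : commonKer ε = ⊥)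
    {b : X → J} (hb : ∀ x, ε x (b x) = 1) (f : J →ₗ[Rᵐᵒᵖ] Rᵐᵒᵖ) (hf : ∀ x, f (b x) = 0) :
    f = 0 := by
  ext y
  have hy : (f y).unop ∈ commonKer ε := fun x ↦ by
    have hswap : MulOpposite.op (b x : R) • y = MulOpposite.op (y : R) • b x :=
      Subtype.ext (mul_comm (y : R) (b x))
    have hzero : MulOpposite.op (b x : R) * f y = 0 := by
      rw [← smul_eq_mul, ← map_smul, hswap, map_smul, hf, smul_zero]
    simpa [hb] using congrArg (fun r ↦ ε x r.unop) hzero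
  rw [hε] at hy
  exact MulOpposite.unop_injective hy

/-- A family of characters `φ` coordinatizes the ideal `J` if evaluation along `φ` identifies
`J / commonKer φ` with the finitely supported functions on the index set. Surjectivity onto these
is encoded by the existence of a dual family in `J`. This is how consecutive terms of the socle
sequence are recognized. -/
structure IsLayerCoordinates {K R ι : Type*} [CommSemiring K] [Ring R] [Algebra K R]
    (φ : ι → R →ₐ[K] K) (J : Submodule Rᵐᵒᵖ R) : Prop where
  commonKer_le : commonKer φ ≤ J
  finite_support : ∀ f ∈ J, (support fun i ↦ φ i f).Finite
  exists_dual : ∀ i, ∃ e ∈ J, φ i e = 1 ∧ ∀ j ≠ i, φ j e = 0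

theorem isLayerCoordinates_const_top {K R : Type*} [CommSemiring K] [Ring R] [Algebra K R]
    (φ : R →ₐ[K] K) : IsLayerCoordinates (fun _ : Unit ↦ φ) ⊤ where
  commonKer_le := le_top
  finite_support _ _ := Set.toFinite _
  exists_dual _ := ⟨1, mem_top, map_one φ, fun _ hj ↦ absurd rfl hj⟩

namespace IsLayerCoordinates

theorem exists_mem_forall_eq {K R ι : Type*} [CommSemiring K] [Ring R] [Algebra K R]
    {φ : ι → R →ₐ[K] K} {J : Submodule Rᵐᵒᵖ R} (h : IsLayerCoordinates φ J) (c : ι →₀ K) :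
    ∃ f ∈ J, ∀ i, φ i f = c i := by
  induction c using Finsupp.induction_linear with
  | zero => exact ⟨0, J.zero_mem, fun i ↦ map_zero (φ i)⟩
  | add c d hc hd =>
    obtain ⟨f, hfJ, hf⟩ := hc
    obtain ⟨g, hgJ, hg⟩ := hd
    exact ⟨f + g, J.add_mem hfJ hgJ, fun i ↦ by rw [map_add, hf, hg, Finsupp.add_apply]⟩
  | single i a =>
    obtain ⟨e, heJ, hei, hej⟩ := h.exists_dual i
    refine ⟨e * algebraMap K R a, J.smul_mem (MulOpposite.op _) heJ, fun j ↦ ?_⟩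
    rw [map_mul, AlgHom.commutes, Algebra.algebraMap_self_apply]
    obtain rfl | hj := eq_or_ne j i
    · rw [hei, one_mul, Finsupp.single_eq_same]
    · rw [hej j hj, zero_mul, Finsupp.single_eq_of_ne hj]

section Socle

variable {K R ι : Type*} [Field K] [CommRing R] [Algebra K R] {φ : ι → R →ₐ[K] K}
  {J : Submodule Rᵐᵒᵖ R}

theorem mkQ_mem_moduleSocle (h : IsLayerCoordinates φ J) {f : R} (c : ι →₀ K)
    (hf : ∀ i, φ i f = c i) :
    (commonKer φ).mkQ f ∈ moduleSocle Rᵐᵒᵖ (R ⧸ commonKer φ) := by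
  induction c using Finsupp.induction_linear generalizing f with
  | zero =>
    rw [show (commonKer φ).mkQ f = 0 from (Quotient.mk_eq_zero _).2 hf]
    exact zero_mem _
  | add c d hc hd =>
    obtain ⟨g, -, hg⟩ := h.exists_mem_forall_eq c
    rw [← add_sub_cancel g f, map_add]
    refine add_mem (hc hg) (hd fun i ↦ ?_)
    rw [map_sub, hf, hg, Finsupp.add_apply, add_sub_cancel_left]
  | single i a =>
    exact mkQ_mem_moduleSocle_of_forall_ne fun j hj ↦
      (hf j).trans (Finsupp.single_eq_of_ne hj)

theorem moduleSocle_eq_map_mkQ (h : IsLayerCoordinates φ J) :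
    moduleSocle Rᵐᵒᵖ (R ⧸ commonKer φ) = J.map (commonKer φ).mkQ := by
  refine le_antisymm (moduleSocle_le_of_essential fun x hx ↦ ?_) ?_
  · obtain ⟨w, rfl⟩ := mkQ_surjective _ x
    obtain ⟨i, hi⟩ : ∃ i, φ i w ≠ 0 := by
      by_contra! hw
      exact hx ((Quotient.mk_eq_zero _).2 hw)
    obtain ⟨e, heJ, hei, -⟩ := h.exists_dual i
    have hJ : w * e ∈ J := mul_comm w e ▸ J.smul_mem (MulOpposite.op w) heJ
    refine ⟨MulOpposite.op e, mem_map_of_mem hJ, fun h0 ↦ hi ?_⟩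
    simpa [hei] using (Quotient.mk_eq_zero _).1 h0 i
  · rintro _ ⟨f, hf, rfl⟩
    exact h.mkQ_mem_moduleSocle (.ofSupportFinite _ (h.finite_support f hf)) fun _ ↦ rfl

end Socle

section Layer

variable {K : Type u} {R : Type (max u v)} {ι : Type v} [Field K] [CommRing R] [Algebra K R]
  {φ : ι → R →ₐ[K] K} {J : Submodule Rᵐᵒᵖ R} {α : Ordinal.{max u v}}

theorem socleSeq_add_one_eq (h : IsLayerCoordinates φ J) (hα : socleSeq R α = commonKer φ) :
    socleSeq R (α + 1) = J := by
  rw [socleSeq_add_one, hα, h.moduleSocle_eq_map_mkQ, comap_map_mkQ,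
    sup_eq_right.2 h.commonKer_le]

theorem exists_layerEquiv (h : IsLayerCoordinates φ J) (hα : socleSeq R α = commonKer φ) :
    ∃ Φ : Layer R α ≃+ (ι →₀ K), RespectsLayerMul R α Φ := by
  have hJ := h.socleSeq_add_one_eq hα
  let ψ : socleSeq R (α + 1) →+ (ι →₀ K) :=
    { toFun x := .ofSupportFinite (fun i ↦ φ i x) (h.finite_support x (hJ.le x.2))
      map_zero' := Finsupp.ext fun i ↦ map_zero (φ i)
      map_add' x y := Finsupp.ext fun i ↦ map_add (φ i) (x : R) y }
  refine exists_layerEquiv_of_surjective ψ (fun c ↦ ?_) (fun x ↦ ?_) fun x y ↦ ?_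
  · obtain ⟨f, hfJ, hf⟩ := h.exists_mem_forall_eq c
    exact ⟨⟨f, hJ.ge hfJ⟩, Finsupp.ext hf⟩
  · rw [hα]
    exact DFunLike.ext_iff
  · exact Finsupp.ext fun i ↦ map_mul (φ i) (x : R) y

end Layer

section LoewyLengthThree

variable {K R : Type u} {ι₀ ι₁ : Type} [Field K] [CommRing R] [Algebra K R]
  {φ₀ : ι₀ → R →ₐ[K] K} {φ₁ : ι₁ → R →ₐ[K] K} {φ₂ : R →ₐ[K] K}

theorem isLeast_three_and_exists_layerEquiv (hφ₀ : commonKer φ₀ = ⊥)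
    (h₀ : IsLayerCoordinates φ₀ (commonKer φ₁))
    (h₁ : IsLayerCoordinates φ₁ (commonKer fun _ : Unit ↦ φ₂)) :
    IsLeast {o | socleSeq R o = ⊤} 3 ∧
    (∃ Φ : Layer R 0 ≃+ (ι₀ →₀ K), RespectsLayerMul R 0 Φ) ∧
    (∃ Φ : Layer R 1 ≃+ (ι₁ →₀ K), RespectsLayerMul R 1 Φ) ∧
    (∃ Φ : Layer R 2 ≃+ K, RespectsLayerMul R 2 Φ) := by
  have h₂ := isLayerCoordinates_const_top φ₂
  have hS₀ : socleSeq R 0 = commonKer φ₀ := socleSeq_zero.trans hφ₀.symm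
  have hS₁ : socleSeq R 1 = commonKer φ₁ :=
    zero_add (1 : Ordinal) ▸ h₀.socleSeq_add_one_eq hS₀
  have hS₂ : socleSeq R 2 = commonKer fun _ : Unit ↦ φ₂ :=
    one_add_one_eq_two (R := Ordinal) ▸ h₁.socleSeq_add_one_eq hS₁
  have hne : socleSeq R 2 ≠ ⊤ := fun htop ↦
    one_ne_zero ((map_one φ₂).symm.trans ((hS₂.symm.trans htop).ge (mem_top (x := 1)) ()))
  obtain ⟨Φ, hΦ⟩ := h₂.exists_layerEquiv hS₂
  refine ⟨?_, h₀.exists_layerEquiv hS₀, h₁.exists_layerEquiv hS₁,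
    Φ.trans (Finsupp.uniqueAddEquiv ()), hΦ.trans _ fun _ _ ↦ rfl⟩
  rw [← two_add_one_eq_three]
  exact isLeast_socleSeq_eq_top hne (h₂.socleSeq_add_one_eq hS₂)

end LoewyLengthThree

section Projective

variable {K : Type*} {R : Type w} {ι : Type v} [CommSemiring K] [Nontrivial K] [CommRing R]
  [Algebra K R] {φ : ι → R →ₐ[K] K} {J : Submodule Rᵐᵒᵖ R}

theorem lift_mk_le_of_span_eq_top (h : IsLayerCoordinates φ J) {T : Set J}
    (hT : span Rᵐᵒᵖ T = ⊤) : lift.{w} #ι ≤ max (lift.{v} #T) ℵ₀ := by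
  suffices hcover : ⋃ t : T, support (fun i ↦ φ i (t : J)) = Set.univ by
    rw [← mk_univ, ← hcover]
    exact lift_mk_iUnion_le_of_finite fun t ↦ h.finite_support _ t.1.2
  refine Set.eq_univ_of_forall fun i ↦ ?_
  by_contra hi
  have hTi : span Rᵐᵒᵖ T ≤ (commonKer fun _ : Unit ↦ φ i).comap J.subtype :=
    span_le.2 fun t ht _ ↦ not_not.1 fun hti ↦ hi (Set.mem_iUnion.2 ⟨⟨t, ht⟩, hti⟩)
  obtain ⟨e, heJ, hei, -⟩ := h.exists_dual i
  rw [hT] at hTi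
  exact one_ne_zero (hei.symm.trans (hTi (mem_top (x := ⟨e, heJ⟩)) ()))

theorem not_projective {X : Type v} {ε : X → R →ₐ[K] K} {J₀ : Submodule Rᵐᵒᵖ R}
    (h : IsLayerCoordinates φ J) (hε : commonKer ε = ⊥) (h₀ : IsLayerCoordinates ε J₀)
    (hJ : J₀ ≤ J) (hcard : max #X ℵ₀ < #ι) : ¬ Module.Projective Rᵐᵒᵖ J := by
  intro hproj
  choose b hbJ hb _ using h₀.exists_dual
  obtain ⟨T, hT, hTX⟩ := exists_span_eq_top_of_projective (fun x ↦ (⟨b x, hJ (hbJ x)⟩ : J))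
    (linearMap_eq_zero_of_commonKer_eq_bot hε hb)
  have : lift.{w} #ι ≤ lift.{w} (max #X ℵ₀) :=
    calc lift.{w} #ι
      _ ≤ max (lift.{v} #T) ℵ₀ := h.lift_mk_le_of_span_eq_top hT
      _ ≤ lift.{w} (max #X ℵ₀) := by
        rw [lift_max, lift_aleph0]
        exact max_le hTX (le_max_right _ _)
  exact (lift_le.1 this).not_gt hcard

end Projective

end IsLayerCoordinates

section Evaluation

variable {K : Type u} {X : Type v}

/-- Evaluation at a point, as a character of an algebra of functions. -/
def evalCharacter [CommRing K] (R' : Subalgebra K (X → K)) (x : X) : R' →ₐ[K] K :=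
  (Pi.evalAlgHom K (fun _ ↦ K) x).comp R'.val

theorem commonKer_evalCharacter [CommRing K] (R' : Subalgebra K (X → K)) :
    commonKer (evalCharacter R') = ⊥ :=
  (Submodule.eq_bot_iff _).2 fun _ hf ↦ Subtype.ext (funext hf)

theorem finite_range_of_mem_span [Semiring K] {s : Set (X → K)}
    (hs : ∀ f ∈ s, (Set.range f).Finite) {f : X → K} (hf : f ∈ span K s) :
    (Set.range f).Finite := by
  induction hf using span_induction with
  | mem f hf => exact hs f hf
  | zero => exact (Set.finite_singleton 0).subset Set.range_const_subset
  | add f g _ _ hf hg =>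
    refine (hf.image2 (· + ·) hg).subset ?_
    rintro _ ⟨x, rfl⟩
    exact Set.mem_image2_of_mem ⟨x, rfl⟩ ⟨x, rfl⟩
  | smul a f _ hf =>
    refine (hf.image (a • ·)).subset ?_
    rintro _ ⟨x, rfl⟩
    exact ⟨f x, ⟨x, rfl⟩, rfl⟩

theorem isVNRegular_of_finite_range [Field K] {R' : Subalgebra K (X → K)}
    (h : ∀ f ∈ R', (Set.range f).Finite) : IsVNRegular R' := by
  classical
  intro r
  let V := (h r r.2).toFinset
  let q := Lagrange.interpolate V id (·⁻¹)
  refine ⟨Polynomial.aeval r q, Subtype.ext (funext fun x ↦ ?_)⟩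
  have hx : (r : X → K) x ∈ V := (h r r.2).mem_toFinset.2 ⟨x, rfl⟩
  have hq : (Polynomial.aeval r q : R').1 x = ((r : X → K) x)⁻¹ := by
    change evalCharacter R' x _ = _
    rw [← Polynomial.aeval_algHom_apply, Polynomial.coe_aeval_eq_eval]
    exact Lagrange.eval_interpolate_at_node _ injective_id.injOn hx
  change (r : X → K) x * (Polynomial.aeval r q : R').1 x * (r : X → K) x = (r : X → K) x
  rw [hq, mul_inv_mul_cancel]

end Evaluation

theorem exists_algHom_eventually_eq {K Q L X : Type*} [CommSemiring K] [Semiring Q] [Semiring L]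
    [Algebra K Q] [Algebra K L] (F : Filter X) [F.NeBot] (ρ : X → Q →ₐ[K] L)
    (h : ∀ q, ∃ c, ∀ᶠ x in F, ρ x q = c) :
    ∃ l : Q →ₐ[K] L, ∀ q, ∀ᶠ x in F, ρ x q = l q := by
  choose c hc using h
  have c_eq {q : Q} {a : L} (ha : ∀ᶠ x in F, ρ x q = a) : c q = a := by
    obtain ⟨x, hx, hx'⟩ := ((hc q).and ha).exists
    exact hx.symm.trans hx'
  refine ⟨{
    toFun := c
    map_one' := c_eq (.of_forall fun x ↦ map_one (ρ x))
    map_mul' q r := c_eq ?_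
    map_zero' := c_eq (.of_forall fun x ↦ map_zero (ρ x))
    map_add' q r := c_eq ?_
    commutes' a := c_eq (.of_forall fun x ↦ (ρ x).commutes a) }, hc⟩
  · filter_upwards [hc q, hc r] with x hq hr
    rw [map_mul, hq, hr]
  · filter_upwards [hc q, hc r] with x hq hr
    rw [map_add, hq, hr]

section AlmostDisjoint

variable {K : Type u} {X : Type v} {ι : Type w} [CommRing K] {A : ι → Set X}

/-- The linear span of the functions `Pi.single x 1`, of the characteristic functions of the
sets `A i`, and of the constant function `1`; for an almost disjoint family `A`, this is the
underlying space of the algebra `R'` of the main theorem. -/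
def almostDisjointSpan (K : Type u) [CommRing K] [DecidableEq X] (A : ι → Set X) :
    Submodule K (X → K) :=
  span K ((Set.range fun x ↦ Pi.single x (1 : K)) ∪
    (Set.range fun i ↦ (A i).indicator fun _ ↦ (1 : K)) ∪ {1})

theorem finite_range_of_mem_almostDisjointSpan [DecidableEq X] {f : X → K}
    (hf : f ∈ almostDisjointSpan K A) : (Set.range f).Finite := by
  refine finite_range_of_mem_span (fun g hg ↦ ((Set.finite_singleton 1).insert 0).subset ?_) hf
  rintro _ ⟨y, rfl⟩
  obtain (⟨x, rfl⟩ | ⟨i, rfl⟩) | rfl := hg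
  · obtain rfl | h := eq_or_ne y x <;> simp [*]
  · exact Set.indicator_eq_zero_or_self (A i) (fun _ ↦ 1) y
  · exact .inr rfl

theorem exists_eventuallyEq_of_mem_almostDisjointSpan [DecidableEq X] {f : X → K}
    (hf : f ∈ almostDisjointSpan K A) :
    ∃ (c : K) (g : ι →₀ K), f =ᶠ[cofinite] Function.const X c +
      Finsupp.linearCombination K (fun i ↦ (A i).indicator fun _ ↦ (1 : K)) g := by
  induction hf using span_induction with
  | mem f hf =>
    obtain (⟨x, rfl⟩ | ⟨i, rfl⟩) | rfl := hf
    · refine ⟨0, 0, (Filter.eventually_cofinite_ne x).mono fun y hy ↦ ?_⟩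
      simp [hy]
    · refine ⟨0, Finsupp.single i 1, .of_eq ?_⟩
      simp
    · refine ⟨1, 0, .of_eq ?_⟩
      simp
  | zero => exact ⟨0, 0, .of_eq (by simp)⟩
  | add f f' _ _ hf hf' =>
    obtain ⟨c, g, hg⟩ := hf
    obtain ⟨c', g', hg'⟩ := hf'
    refine ⟨c + c', g + g', (hg.add hg').trans (.of_eq ?_)⟩
    rw [map_add, ← add_add_add_comm]
    rfl
  | smul a f _ hf =>
    obtain ⟨c, g, hg⟩ := hf
    refine ⟨a • c, a • g, (hg.const_smul a).trans (.of_eq ?_)⟩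
    rw [map_smul, smul_add]
    rfl

theorem eventually_linearCombination_eq (had : Pairwise fun i j ↦ (A i ∩ A j).Finite)
    (g : ι →₀ K) (i : ι) : ∀ᶠ x in cofinite ⊓ 𝓟 (A i),
      Finsupp.linearCombination K (fun i ↦ (A i).indicator fun _ ↦ (1 : K)) g x = g i := by
  induction g using Finsupp.induction_linear with
  | zero => simp
  | add g g' hg hg' =>
    filter_upwards [hg, hg'] with x hx hx'
    rw [map_add, Pi.add_apply, hx, hx', Finsupp.add_apply]
  | single j a =>
    rw [Filter.eventually_inf_principal]
    obtain rfl | hij := eq_or_ne i j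
    · exact .of_forall fun x hx ↦ by simp [hx]
    · filter_upwards [(had hij).compl_mem_cofinite] with x hx hxi
      have : x ∉ A j := fun hxj ↦ hx ⟨hxi, hxj⟩
      simp [this, hij.symm]

theorem eventually_eq_const_add (had : Pairwise fun i j ↦ (A i ∩ A j).Finite) {f : X → K} {c : K}
    {g : ι →₀ K} (hf : f =ᶠ[cofinite] Function.const X c +
      Finsupp.linearCombination K (fun i ↦ (A i).indicator fun _ ↦ (1 : K)) g) (i : ι) :
    ∀ᶠ x in cofinite ⊓ 𝓟 (A i), f x = c + g i := by
  filter_upwards [hf.filter_mono inf_le_left, eventually_linearCombination_eq had g i] with x hx hg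
  rw [hx, Pi.add_apply, hg, Function.const_apply]

/-- The characters of an algebra of functions obtained by taking eventual values, along each set
`A i` for `branch i`, and then along the index set for `infinity`. -/
structure LimitCharacters (R' : Subalgebra K (X → K)) (A : ι → Set X) where
  branch : ι → R' →ₐ[K] K
  infinity : R' →ₐ[K] K
  eventually_eq_branch : ∀ (i : ι) (f : R'), ∀ᶠ x in cofinite ⊓ 𝓟 (A i), f.1 x = branch i f
  eventually_branch_eq : ∀ f : R', ∀ᶠ i in cofinite, branch i f = infinity f

namespace LimitCharacters

variable {R' : Subalgebra K (X → K)}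

theorem branch_eq (L : LimitCharacters R' A) (hinf : ∀ i, (A i).Infinite) {i : ι} {f : R'} {a : K}
    (h : ∀ᶠ x in cofinite ⊓ 𝓟 (A i), f.1 x = a) : L.branch i f = a := by
  have := Filter.cofinite_inf_principal_neBot_iff.2 (hinf i)
  obtain ⟨x, hx, hx'⟩ := ((L.eventually_eq_branch i f).and h).exists
  exact hx.symm.trans hx'

theorem infinity_eq [Infinite ι] (L : LimitCharacters R' A) {f : R'} {a : K}
    (h : ∀ᶠ i in cofinite, L.branch i f = a) : L.infinity f = a := by
  obtain ⟨i, hi, hi'⟩ := ((L.eventually_branch_eq f).and h).exists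
  exact hi.symm.trans hi'

theorem branch_eq_const_add (L : LimitCharacters R' A) (hinf : ∀ i, (A i).Infinite)
    (had : Pairwise fun i j ↦ (A i ∩ A j).Finite) {f : R'} {c : K} {g : ι →₀ K}
    (hf : f.1 =ᶠ[cofinite] Function.const X c +
      Finsupp.linearCombination K (fun i ↦ (A i).indicator fun _ ↦ (1 : K)) g) (i : ι) :
    L.branch i f = c + g i :=
  L.branch_eq hinf (eventually_eq_const_add had hf i)

theorem nonempty [DecidableEq X] [Infinite ι] (hinf : ∀ i, (A i).Infinite)
    (had : Pairwise fun i j ↦ (A i ∩ A j).Finite)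
    (hR' : Subalgebra.toSubmodule R' ≤ almostDisjointSpan K A) :
    Nonempty (LimitCharacters R' A) := by
  have (i : ι) := Filter.cofinite_inf_principal_neBot_iff.2 (hinf i)
  choose c g hcg using fun f : R' ↦ exists_eventuallyEq_of_mem_almostDisjointSpan (hR' f.2)
  have hval (f : R') (i : ι) := eventually_eq_const_add had (hcg f) i
  choose β hβ using fun i ↦ exists_algHom_eventually_eq (cofinite ⊓ 𝓟 (A i)) (evalCharacter R')
    fun f ↦ ⟨c f + g f i, hval f i⟩
  obtain ⟨l, hl⟩ := exists_algHom_eventually_eq cofinite β fun f ↦ by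
    refine ⟨c f, ?_⟩
    filter_upwards [(g f).support.finite_toSet.compl_mem_cofinite] with i hi
    obtain ⟨x, hx, hx'⟩ := ((hβ i f).and (hval f i)).exists
    rw [← hx, ← add_zero (c f), ← Finsupp.notMem_support_iff.1 hi]
    exact hx'
  exact ⟨⟨β, l, hβ, hl⟩⟩

theorem isLayerCoordinates_evalCharacter [DecidableEq X] [Infinite ι] (L : LimitCharacters R' A)
    (hinf : ∀ i, (A i).Infinite) (had : Pairwise fun i j ↦ (A i ∩ A j).Finite)
    (hR' : Subalgebra.toSubmodule R' = almostDisjointSpan K A) :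
    IsLayerCoordinates (evalCharacter R') (commonKer L.branch) where
  commonKer_le := (commonKer_evalCharacter R').trans_le bot_le
  finite_support f hf := by
    obtain ⟨c, g, hcg⟩ := exists_eventuallyEq_of_mem_almostDisjointSpan (hR'.le f.2)
    have hg (i : ι) : c + g i = 0 := (L.branch_eq_const_add hinf had hcg i).symm.trans (hf i)
    obtain ⟨i, hi⟩ := Infinite.exists_notMem_finset g.support
    have hc : c = 0 := by simpa [Finsupp.notMem_support_iff.1 hi] using hg i
    have hg0 : g = 0 := Finsupp.ext fun i ↦ by simpa [hc] using hg i
    rw [hc, hg0, map_zero, add_zero] at hcg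
    exact Filter.eventually_cofinite.1 hcg
  exists_dual x := by
    have hx : Pi.single x 1 ∈ R' := hR'.ge (subset_span (.inl (.inl ⟨x, rfl⟩)))
    refine ⟨⟨Pi.single x 1, hx⟩, fun i ↦ L.branch_eq hinf ?_, Pi.single_eq_same x 1,
      fun y hy ↦ Pi.single_eq_of_ne hy 1⟩
    filter_upwards [(Filter.eventually_cofinite_ne x).filter_mono inf_le_left] with y hy
    exact Pi.single_eq_of_ne hy 1

theorem isLayerCoordinates_branch [DecidableEq X] [Infinite ι] (L : LimitCharacters R' A)
    (hinf : ∀ i, (A i).Infinite) (had : Pairwise fun i j ↦ (A i ∩ A j).Finite)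
    (hR' : almostDisjointSpan K A ≤ Subalgebra.toSubmodule R') :
    IsLayerCoordinates L.branch (commonKer fun _ : Unit ↦ L.infinity) where
  commonKer_le f hf _ := L.infinity_eq (.of_forall hf)
  finite_support f hf := by
    have h := L.eventually_branch_eq f
    rw [hf ()] at h
    exact Filter.eventually_cofinite.1 h
  exists_dual i := by
    have hi : (A i).indicator (fun _ ↦ 1) ∈ R' := hR' (subset_span (.inl (.inr ⟨i, rfl⟩)))
    let e : R' := ⟨_, hi⟩
    have he (j : ι) : L.branch j e = Finsupp.single i 1 j := by
      refine L.branch_eq hinf ?_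
      simpa using eventually_linearCombination_eq had (Finsupp.single i (1 : K)) j
    refine ⟨e, fun _ ↦ L.infinity_eq ?_, (he i).trans Finsupp.single_eq_same,
      fun j hj ↦ (he j).trans (Finsupp.single_eq_of_ne hj)⟩
    filter_upwards [Filter.eventually_cofinite_ne i] with j hj
    exact (he j).trans (Finsupp.single_eq_of_ne hj)

end LimitCharacters

end AlmostDisjoint

theorem almostDisjoint_algebra_not_hereditary_general (K : Type u) [Field K]
    {X : Type} [DecidableEq X] (S : Set (Set X)) (hcard : #X < #S)
    (hinf : ∀ A ∈ S, A.Infinite)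
    (had : ∀ A ∈ S, ∀ B ∈ S, A ≠ B → (A ∩ B).Finite)
    (R' : Subalgebra K (X → K))
    (hR' : (R' : Set (X → K)) =
      ↑(Submodule.span K ((Set.range fun x => Pi.single x (1 : K)) ∪
        ((fun A => Set.indicator A fun _ => (1 : K)) '' S) ∪ {1}))) :
    IsVNRegular ↥R' ∧
    IsRightSemiartinian ↥R' ∧
    HasPFA ↥R' ∧
    IsLeast {o : Ordinal.{u} | socleSeq ↥R' o = ⊤} 3 ∧
    (∃ φ : Layer ↥R' 0 ≃+ (X →₀ K), RespectsLayerMul ↥R' 0 φ) ∧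
    (∃ φ : Layer ↥R' 1 ≃+ (S →₀ K), RespectsLayerMul ↥R' 1 φ) ∧
    (∃ φ : Layer ↥R' 2 ≃+ K, RespectsLayerMul ↥R' 2 φ) ∧
    ¬(∀ I : Submodule (↥R')ᵐᵒᵖ ↥R', Module.Projective (↥R')ᵐᵒᵖ ↥I) := by
  have hspan : Subalgebra.toSubmodule R' = almostDisjointSpan K ((↑) : S → Set X) :=
    SetLike.coe_injective (by rw [Set.image_eq_range] at hR'; exact hR')
  have hinf' (A : S) : (A : Set X).Infinite := hinf A A.2
  have had' : Pairwise fun A B : S ↦ ((A : Set X) ∩ B).Finite :=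
    fun A B h ↦ had A A.2 B B.2 (Subtype.coe_ne_coe.2 h)
  obtain ⟨A⟩ : Nonempty S := mk_ne_zero_iff.1 (pos_of_gt hcard).ne'
  have : Infinite X := Set.infinite_univ_iff.1 ((hinf' A).mono (Set.subset_univ _))
  have hcard' : max #X ℵ₀ < #S := max_lt hcard ((aleph0_le_mk X).trans_lt hcard)
  have : Infinite S := infinite_iff.2 ((le_max_right _ _).trans hcard'.le)
  obtain ⟨L⟩ := LimitCharacters.nonempty hinf' had' hspan.le
  have h₀ := L.isLayerCoordinates_evalCharacter hinf' had' hspan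
  have h₁ := L.isLayerCoordinates_branch hinf' had' hspan.ge
  have hker := commonKer_evalCharacter R'
  obtain ⟨hlen, hL₀, hL₁, hL₂⟩ :=
    IsLayerCoordinates.isLeast_three_and_exists_layerEquiv hker h₀ h₁
  exact ⟨isVNRegular_of_finite_range fun f hf ↦
      finite_range_of_mem_almostDisjointSpan (hspan.le hf),
    isRightSemiartinian_of_socleSeq_eq_top hlen.1, hasPFA_of_commRing R', hlen, hL₀, hL₁, hL₂,
    fun hproj ↦ h₁.not_projective hker h₀ h₁.commonKer_le hcard' (hproj _)⟩

/-- for an almost disjoint family `S` of cardinality `ℵ₁` of infinite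
subsets of `ω`, the `K`-subalgebra `R'` of `K^ω` spanned, as a `K`-linear subspace, by
the canonical basis of `K^{(ω)}`, the characteristic functions of the members of `S`,
and the unit, is a semiartinian von Neumann regular ring with primitive factors
artinian of Loewy length `3`, with layers `L₀ ≅ K^{(ω)}`, `L₁ ≅ K^{(ω₁)}` and
`L₂ ≅ K` (as rings without unit), and `R'` is not right hereditary. -/
theorem almostDisjoint_algebra_not_hereditary (K : Type u) [Field K]
    (S : Set (Set ℕ))
    (hcard : Cardinal.mk S = Cardinal.aleph 1)
    (hinf : ∀ A ∈ S, A.Infinite)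
    (had : ∀ A ∈ S, ∀ B ∈ S, A ≠ B → (A ∩ B).Finite)
    (R' : Subalgebra K (ℕ → K))
    (hR' : (R' : Set (ℕ → K)) =
      ↑(Submodule.span K ((Set.range fun n => Pi.single n (1 : K)) ∪
        ((fun A => Set.indicator A fun _ => (1 : K)) '' S) ∪ {1}))) :
    IsVNRegular ↥R' ∧
    IsRightSemiartinian ↥R' ∧
    HasPFA ↥R' ∧
    IsLeast {o : Ordinal.{u} | socleSeq ↥R' o = ⊤} 3 ∧
    (∃ φ : Layer ↥R' 0 ≃+ (ℕ →₀ K), RespectsLayerMul ↥R' 0 φ) ∧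
    (∃ (ι : Type u) (_ : Cardinal.mk ι = Cardinal.aleph 1)
      (φ : Layer ↥R' 1 ≃+ (ι →₀ K)), RespectsLayerMul ↥R' 1 φ) ∧
    (∃ φ : Layer ↥R' 2 ≃+ K, RespectsLayerMul ↥R' 2 φ) ∧
    ¬(∀ I : Submodule (↥R')ᵐᵒᵖ ↥R', Module.Projective (↥R')ᵐᵒᵖ ↥I) := by
  have hS : #(ULift.{u} S) = ℵ_ 1 := by rw [mk_uLift, hcard, lift_aleph, Ordinal.lift_one]
  obtain ⟨hvnr, hsemi, hpfa, hlen, hL₀, ⟨φ, hφ⟩, hL₂, hproj⟩ :=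
    almostDisjoint_algebra_not_hereditary_general K S
      (by rw [hcard, mk_nat]; exact aleph0_lt_aleph_one) hinf had R' hR'
  let e : (S →₀ K) ≃+ (ULift.{u} S →₀ K) := Finsupp.domCongr Equiv.ulift.symm
  exact ⟨hvnr, hsemi, hpfa, hlen, hL₀,
    ⟨_, hS, φ.trans e, hφ.trans e fun _ _ ↦ Finsupp.ext fun _ ↦ rfl⟩, hL₂, hproj⟩
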